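/- arXiv:2305.12553 — 3 statements merged into one kernel-verified Lean document; each statement's English description precedes it below -/
import Mathlib

section
/- (Lemma 1: unilateral policy deviations perturb the induced transition matrix of a Markov congestion game by O(1/n).) Consider the Markov congestion game G_mcg described in the context. Then for every player i, all policies π_i, π_i' of player i, and every π_{-i}: max_{s∈S} ∑_{s'∈S} |P^{(π_i,π_{-i})}(s'|s) − P^{(π_i',π_{-i})}(s'|s)| ≤ 2·ζ·|S|·D·max_{a_i∈A_i}|a_i| / n. -/
open Finset

section MarkovGameDefs

variable {S : Type*} {I : Type*} {A : I → Type*}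

/-- A probability vector on a finite set. -/
def IsProbVec {α : Type*} [Fintype α] (p : α → ℝ) : Prop :=
  (∀ a, 0 ≤ p a) ∧ ∑ a, p a = 1

/-- A stationary policy profile: each player's policy gives a probability vector at each state. -/
def IsPolicy [Fintype I] [∀ i, Fintype (A i)] (π : ∀ i, S → A i → ℝ) : Prop :=
  ∀ i s, IsProbVec (π i s)

/-- A transition kernel. -/
def IsKernel [Fintype S] (P : S → (∀ i, A i) → S → ℝ) : Prop :=
  ∀ s a, IsProbVec (fun s' => P s a s')

/-- Product distribution on joint actions induced by a profile. -/
noncomputable def jointDist [Fintype I] (π : ∀ i, S → A i → ℝ) (s : S) (a : ∀ i, A i) : ℝ :=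
  ∏ i, π i s (a i)

/-- Induced transition matrix `P^π`. -/
noncomputable def transMat [Fintype S] [Fintype I] [DecidableEq I] [∀ i, Fintype (A i)]
    (P : S → (∀ i, A i) → S → ℝ) (π : ∀ i, S → A i → ℝ) (s s' : S) : ℝ :=
  ∑ a : ∀ j, A j, jointDist π s a * P s a s'

/-- Expected one-stage payoff `u(s,π)`. -/
noncomputable def expPay [Fintype I] [DecidableEq I] [∀ i, Fintype (A i)]
    (u : S → (∀ i, A i) → ℝ) (π : ∀ i, S → A i → ℝ) (s : S) : ℝ :=
  ∑ a : ∀ j, A j, jointDist π s a * u s a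

/-- `V` solves the Bellman equation for payoff `u`, kernel `P`, discount `δ`, profile `π`. -/
def IsValueFun [Fintype S] [Fintype I] [DecidableEq I] [∀ i, Fintype (A i)]
    (δ : ℝ) (P : S → (∀ i, A i) → S → ℝ) (u : S → (∀ i, A i) → ℝ)
    (π : ∀ i, S → A i → ℝ) (V : S → ℝ) : Prop :=
  ∀ s, V s = expPay u π s + δ * ∑ s', transMat P π s s' * V s'

/-- Player `i`'s Q-function, given a value function `V` for player `i` under `π`. -/
noncomputable def Qfun [Fintype S] [Fintype I] [DecidableEq I] [∀ i, Fintype (A i)]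
    [∀ i, DecidableEq (A i)]
    (δ : ℝ) (P : S → (∀ i, A i) → S → ℝ) (u : S → (∀ i, A i) → ℝ)
    (π : ∀ i, S → A i → ℝ) (V : S → ℝ) (i : I) (s : S) (ai : A i) : ℝ :=
  ∑ a : ∀ j, A j,
    if a i = ai then
      (∏ j ∈ Finset.univ.erase i, π j s (a j)) * (u s a + δ * ∑ s', P s a s' * V s')
    else 0

/-- Discounted state visitation distribution `d_μ^π`. -/
noncomputable def dvisit [Fintype S] [DecidableEq S] [Fintype I] [DecidableEq I]
    [∀ i, Fintype (A i)]
    (δ : ℝ) (P : S → (∀ i, A i) → S → ℝ) (π : ∀ i, S → A i → ℝ) (μ : S → ℝ) (s : S) : ℝ :=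
  (1 - δ) * ∑' k : ℕ, δ ^ k * ∑ s0, μ s0 * ((Matrix.of (transMat P π)) ^ k) s0 s

/-- Negative entropy `ν(p) = ∑ p log p` (with the convention `0 log 0 = 0`,
which holds automatically since `Real.log 0 = 0`). -/
noncomputable def negent {α : Type*} [Fintype α] (p : α → ℝ) : ℝ :=
  ∑ a, p a * Real.log (p a)

/-- `Ṽ` solves the Bellman equation of the `τ`-smoothed game for player `i`. -/
def IsSmoothedValueFun [Fintype S] [Fintype I] [DecidableEq I] [∀ i, Fintype (A i)]
    (δ τ : ℝ) (P : S → (∀ i, A i) → S → ℝ) (u : S → (∀ i, A i) → ℝ)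
    (π : ∀ i, S → A i → ℝ) (i : I) (Vt : S → ℝ) : Prop :=
  ∀ s, Vt s = expPay u π s - τ * negent (π i s) + δ * ∑ s', transMat P π s s' * Vt s'

/-- Smoothed Q-function `Q̃_i(s,a_i;π)`. -/
noncomputable def Qsmooth [Fintype S] [Fintype I] [DecidableEq I] [∀ i, Fintype (A i)]
    [∀ i, DecidableEq (A i)]
    (δ τ : ℝ) (P : S → (∀ i, A i) → S → ℝ) (u : S → (∀ i, A i) → ℝ)
    (π : ∀ i, S → A i → ℝ) (Vt : S → ℝ) (i : I) (s : S) (ai : A i) : ℝ :=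
  ∑ a : ∀ j, A j,
    if a i = ai then
      (∏ j ∈ Finset.univ.erase i, π j s (a j)) *
        (u s a - τ * negent (π i s) + δ * ∑ s', P s a s' * Vt s')
    else 0

/-- Euclidean (ℓ²) norm on `α → ℝ`. -/
noncomputable def l2norm {α : Type*} [Fintype α] (f : α → ℝ) : ℝ :=
  Real.sqrt (∑ a, f a ^ 2)

/-- Standard inner product on `α → ℝ`. -/
noncomputable def dotp {α : Type*} [Fintype α] (f g : α → ℝ) : ℝ :=
  ∑ a, f a * g a

/-- `y` is the Euclidean orthogonal projection of `x` onto the probability simplex. -/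
noncomputable def IsProjSimplex {α : Type*} [Fintype α] (x y : α → ℝ) : Prop :=
  IsProbVec y ∧ ∀ z, IsProbVec z → l2norm (fun a => y a - x a) ≤ l2norm (fun a => z a - x a)

/-- Softmax (smoothed best response) with temperature `τ`. -/
noncomputable def softmax {α : Type*} [Fintype α] (τ : ℝ) (q : α → ℝ) (a : α) : ℝ :=
  Real.exp (q a / τ) / ∑ a', Real.exp (q a' / τ)

end MarkovGameDefs

section CongestionDefs

variable {S E I : Type*} {A : I → Type*}

/-- Number of players using resource `e` under joint action `a`. -/
def nUsers [Fintype I] [DecidableEq E] (act : ∀ i, A i → Finset E)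
    (a : ∀ i, A i) (e : E) : ℕ :=
  (Finset.univ.filter (fun i => e ∈ act i (a i))).card

/-- Aggregate usage `w_e(a) = (D/n) · |{i : e ∈ a_i}|`. -/
noncomputable def waggr [Fintype I] [DecidableEq E] (act : ∀ i, A i → Finset E)
    (D : ℝ) (a : ∀ i, A i) (e : E) : ℝ :=
  D / (Fintype.card I) * (nUsers act a e)

/-- One-stage congestion payoff `u_i(s,a) = ∑_{e ∈ a_i} c_e(s, w_e(a))`. -/
noncomputable def congPay [Fintype I] [DecidableEq E] (act : ∀ i, A i → Finset E)
    (D : ℝ) (c : E → S → ℝ → ℝ) (i : I) (s : S) (a : ∀ i, A i) : ℝ :=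
  ∑ e ∈ act i (a i), c e s (waggr act D a e)

/-- Rosenthal's potential of the stage game:
`φ(s,a) = ∑_{e∈E} ∑_{j=1}^{w_e(a)·n/D} c_e(s, j·D/n)`. -/
noncomputable def rosenthal [Fintype I] [Fintype E] [DecidableEq E]
    (act : ∀ i, A i → Finset E) (D : ℝ) (c : E → S → ℝ → ℝ) (s : S) (a : ∀ i, A i) : ℝ :=
  ∑ e : E, ∑ j ∈ Finset.Icc 1 (nUsers act a e), c e s (j * D / (Fintype.card I))

end CongestionDefs

/-!
Couple the two joint actions: draw `a` from the product distribution of `π` and, independently, `b`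
from player `i`'s new policy. Then `a` has the original law and `Function.update a i b` the deviated
one, so each transition probability changes by at most the worst change of the kernel under a
unilateral change of action. Such a change moves the aggregate usage by `D / n` on exactly the
resources in the symmetric difference of the two actions of player `i`.
-/

section CoordinateUpdate

variable {ι : Type*}

@[to_additive]
lemma prod_mul_eq_prod_mul_of_forall_ne [Fintype ι] {M : Type*} [CommMonoid M] {f g : ι → M}
    {i : ι} (h : ∀ j ≠ i, f j = g j) : (∏ j, f j) * g i = (∏ j, g j) * f i := by
  classical
  have hcompl : ∏ j ∈ {i}ᶜ, f j = ∏ j ∈ {i}ᶜ, g j :=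
    prod_congr rfl fun j hj => h j (by simpa using hj)
  rw [Fintype.prod_eq_prod_compl_mul i f, Fintype.prod_eq_prod_compl_mul i g, hcompl,
    mul_right_comm]

variable [DecidableEq ι] {α : ι → Type*}

lemma involutive_update_swap (i : ι) :
    Function.Involutive fun x : (∀ j, α j) × α i => (Function.update x.1 i x.2, x.1 i) := by
  intro x
  simp

variable [Fintype ι] [∀ j, Fintype (α j)] {R : Type*} [CommSemiring R]

-- Exchanging the `i`-th coordinate of `a` with `b` also exchanges the weights `p i` and `q`.
lemma sum_prod_update_mul {p : ∀ j, α j → R} {i : ι} (hpi : ∑ b, p i b = 1) (q : α i → R)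
    (f : (∀ j, α j) → R) :
    ∑ a, (∏ j, Function.update p i q j (a j)) * f a =
      ∑ x : (∀ j, α j) × α i, (∏ j, p j (x.1 j)) * q x.2 * f (Function.update x.1 i x.2) := by
  calc ∑ a, (∏ j, Function.update p i q j (a j)) * f a
      = ∑ x : (∀ j, α j) × α i,
          (∏ j, Function.update p i q j (x.1 j)) * p i x.2 * f x.1 := by
        simp only [Fintype.sum_prod_type, ← sum_mul, ← mul_sum, hpi, mul_one]
    _ = ∑ x : (∀ j, α j) × α i,
          (∏ j, p j (x.1 j)) * q x.2 * f (Function.update x.1 i x.2) := by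
        refine (Fintype.sum_equiv (involutive_update_swap i).toPerm _ _ fun x => ?_).symm
        have hswap := prod_mul_eq_prod_mul_of_forall_ne (i := i) (f := fun j => p j (x.1 j))
          (g := fun j => Function.update p i q j (Function.update x.1 i x.2 j))
          fun j hj => by simp only [Function.update_of_ne hj]
        simp only [Function.update_self] at hswap
        simp only [Function.Involutive.coe_toPerm, hswap]

end CoordinateUpdate

namespace IsProbVec

lemma prod {α β : Type*} [Fintype α] [Fintype β] {p : α → ℝ} {q : β → ℝ} (hp : IsProbVec p)
    (hq : IsProbVec q) : IsProbVec fun x : α × β => p x.1 * q x.2 :=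
  ⟨fun x => mul_nonneg (hp.1 x.1) (hq.1 x.2), by
    rw [Fintype.sum_prod_type, ← Fintype.sum_mul_sum, hp.2, hq.2, one_mul]⟩

lemma abs_sum_mul_le {α : Type*} [Fintype α] {p : α → ℝ} (hp : IsProbVec p) {f : α → ℝ} {C : ℝ}
    (hf : ∀ a, |f a| ≤ C) : |∑ a, p a * f a| ≤ C :=
  calc |∑ a, p a * f a|
      ≤ ∑ a, |p a * f a| := abs_sum_le_sum_abs _ _
    _ = ∑ a, p a * |f a| := by simp only [abs_mul, abs_of_nonneg (hp.1 _)]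
    _ ≤ ∑ a, p a * C := sum_le_sum fun a _ => mul_le_mul_of_nonneg_left (hf a) (hp.1 a)
    _ = C := by rw [← sum_mul, hp.2, one_mul]

variable {ι : Type*} [Fintype ι] [DecidableEq ι] {α : ι → Type*} [∀ j, Fintype (α j)]
  {p : ∀ j, α j → ℝ}

lemma pi (hp : ∀ j, IsProbVec (p j)) : IsProbVec fun a : ∀ j, α j => ∏ j, p j (a j) :=
  ⟨fun a => prod_nonneg fun j _ => (hp j).1 (a j), by
    rw [← Fintype.prod_sum]
    exact prod_eq_one fun j _ => (hp j).2⟩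

lemma abs_sum_pi_mul_sub_sum_pi_update_mul_le (hp : ∀ j, IsProbVec (p j)) {i : ι} {q : α i → ℝ}
    (hq : IsProbVec q) {f : (∀ j, α j) → ℝ} {C : ℝ}
    (hf : ∀ a b, |f a - f (Function.update a i b)| ≤ C) :
    |∑ a, (∏ j, p j (a j)) * f a - ∑ a, (∏ j, Function.update p i q j (a j)) * f a| ≤ C := by
  have hmarginal : ∑ a, (∏ j, p j (a j)) * f a =
      ∑ x : (∀ j, α j) × α i, (∏ j, p j (x.1 j)) * q x.2 * f x.1 := by
    simp only [Fintype.sum_prod_type, ← sum_mul, ← mul_sum, hq.2, mul_one]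
  rw [hmarginal, sum_prod_update_mul (hp i).2, ← sum_sub_distrib]
  simp only [← mul_sub]
  exact ((pi hp).prod hq).abs_sum_mul_le fun x => hf x.1 x.2

end IsProbVec

section Transition

variable {S I : Type*} [Fintype I] [DecidableEq I] {A : I → Type*}

lemma jointDist_update (π : ∀ j, S → A j → ℝ) (i : I) (πi' : S → A i → ℝ) (s : S)
    (a : ∀ j, A j) :
    jointDist (Function.update π i πi') s a =
      ∏ j, Function.update (fun j => π j s) i (πi' s) j (a j) :=
  prod_congr rfl fun j _ =>
    congrFun (Function.apply_update (fun _ ρ => ρ s) π i πi' j) (a j)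

lemma IsPolicy.abs_transMat_sub_transMat_update_le [Fintype S] [∀ j, Fintype (A j)]
    {π : ∀ j, S → A j → ℝ} (hπ : IsPolicy π) {i : I} {πi' : S → A i → ℝ} {s s' : S}
    (hπi' : IsProbVec (πi' s)) {P : S → (∀ j, A j) → S → ℝ} {C : ℝ}
    (hP : ∀ a b, |P s a s' - P s (Function.update a i b) s'| ≤ C) :
    |transMat P π s s' - transMat P (Function.update π i πi') s s'| ≤ C := by
  simp only [transMat, jointDist_update]
  exact IsProbVec.abs_sum_pi_mul_sub_sum_pi_update_mul_le (fun j => hπ j s) hπi' hP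

end Transition

lemma card_symmDiff_le_two_mul_sup_card {α E : Type*} [Fintype α] [DecidableEq E]
    (f : α → Finset E) (b c : α) : #(symmDiff (f b) (f c)) ≤ 2 * univ.sup fun x => #(f x) :=
  calc #(symmDiff (f b) (f c))
      ≤ #(f b ∪ f c) := card_le_card symmDiff_subset_union
    _ ≤ #(f b) + #(f c) := card_union_le _ _
    _ ≤ (univ.sup fun x => #(f x)) + univ.sup fun x => #(f x) :=
      add_le_add (le_sup (f := fun x => #(f x)) (mem_univ b))
        (le_sup (f := fun x => #(f x)) (mem_univ c))
    _ = 2 * univ.sup fun x => #(f x) := (two_mul _).symm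

section Usage

variable {E I : Type*} [DecidableEq E] [Fintype I] [DecidableEq I] {A : I → Type*}
  (act : ∀ i, A i → Finset E) (D : ℝ) (a : ∀ i, A i) (i : I) (b : A i)

lemma abs_nUsers_sub_nUsers_update (e : E) :
    |(nUsers act a e : ℝ) - nUsers act (Function.update a i b) e| =
      if e ∈ symmDiff (act i (a i)) (act i b) then 1 else 0 := by
  have hexchange := sum_add_eq_sum_add_of_forall_ne (i := i)
    (f := fun j => if e ∈ act j (a j) then (1 : ℝ) else 0)
    (g := fun j => if e ∈ act j (Function.update a i b j) then (1 : ℝ) else 0)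
    fun j hj => by simp only [Function.update_of_ne hj]
  simp only [Function.update_self, sum_boole] at hexchange
  rw [nUsers, nUsers, sub_eq_sub_iff_add_eq_add.mpr (hexchange.trans (add_comm _ _))]
  by_cases ha : e ∈ act i (a i) <;> by_cases hb : e ∈ act i b <;> simp [mem_symmDiff, ha, hb]

lemma sum_abs_waggr_sub_waggr_update [Fintype E] :
    ∑ e, |waggr act D a e - waggr act D (Function.update a i b) e| =
      |D| / Fintype.card I * #(symmDiff (act i (a i)) (act i b)) := by
  simp only [waggr, ← mul_sub, abs_mul, abs_nUsers_sub_nUsers_update, ← mul_sum, abs_div,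
    Nat.abs_cast, sum_boole, filter_univ_mem]

end Usage

theorem congestion_transition_deviation_bound_general
    {S E I : Type*} [Fintype S] [Fintype E] [DecidableEq E] [Fintype I] [DecidableEq I]
    {A : I → Type*} [∀ i, Fintype (A i)] (act : ∀ i, A i → Finset E) {D : ℝ} (hD : 0 ≤ D)
    {P : S → (∀ i, A i) → S → ℝ} {ζ : ℝ} (hζ : 0 ≤ ζ)
    (hLip : ∀ s s' a a',
      |P s a s' - P s a' s'| ≤ ζ * ∑ e, |waggr act D a e - waggr act D a' e|)
    (i : I) {π : ∀ j, S → A j → ℝ} (hπ : IsPolicy π)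
    {πi' : S → A i → ℝ} (hπi' : ∀ s, IsProbVec (πi' s)) (s : S) :
    ∑ s', |transMat P π s s' - transMat P (Function.update π i πi') s s'| ≤
      2 * ζ * Fintype.card S * D * (univ.sup fun ai : A i => #(act i ai) : ℕ) /
        Fintype.card I := by
  set M : ℕ := univ.sup fun ai : A i => #(act i ai)
  have husage (a : ∀ j, A j) (b : A i) :
      ∑ e, |waggr act D a e - waggr act D (Function.update a i b) e| ≤
        D / Fintype.card I * (2 * M) := by
    rw [sum_abs_waggr_sub_waggr_update, abs_of_nonneg hD]
    gcongr
    exact_mod_cast card_symmDiff_le_two_mul_sup_card (act i) (a i) b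
  have hentry (s' : S) : |transMat P π s s' - transMat P (Function.update π i πi') s s'| ≤
      ζ * (D / Fintype.card I * (2 * M)) :=
    hπ.abs_transMat_sub_transMat_update_le (hπi' s) fun a b =>
      (hLip s s' a _).trans (mul_le_mul_of_nonneg_left (husage a b) hζ)
  calc ∑ s', |transMat P π s s' - transMat P (Function.update π i πi') s s'|
      ≤ Fintype.card S • (ζ * (D / Fintype.card I * (2 * M))) :=
        sum_le_card_nsmul _ _ _ fun s' _ => hentry s'
    _ = 2 * ζ * Fintype.card S * D * M / Fintype.card I := by
        rw [nsmul_eq_mul]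
        ring

/-- **Lemma 1.** Unilateral policy deviations perturb the induced transition matrix of a
Markov congestion game by `O(1/n)`. -/
theorem congestion_transition_deviation_bound
    {S E I : Type*} [Fintype S] [Nonempty S] [DecidableEq S]
    [Fintype E] [Nonempty E] [DecidableEq E]
    [Fintype I] [Nonempty I] [DecidableEq I]
    {A : I → Type*} [∀ i, Fintype (A i)] [∀ i, Nonempty (A i)] [∀ i, DecidableEq (A i)]
    -- each action is a subset of the resource set E
    (act : ∀ i, A i → Finset E) (hact : ∀ i, Function.Injective (act i))
    (D : ℝ) (hD : 0 < D)
    -- the transition depends on actions only through the aggregate usage vector,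
    -- and is ζ-Lipschitz in it (ℓ¹ norm)
    (P : S → (∀ i, A i) → S → ℝ) (hP : IsKernel P)
    (Pbar : S → (E → ℝ) → S → ℝ)
    (hPw : ∀ s a s', P s a s' = Pbar s (waggr act D a) s')
    (ζ : ℝ) (hζ : 0 < ζ)
    (hLip : ∀ (s s' : S) (w w' : E → ℝ),
      |Pbar s w s' - Pbar s w' s'| ≤ ζ * ∑ e, |w e - w' e|) :
    ∀ (i : I) (π : ∀ j, S → A j → ℝ), IsPolicy π →
      ∀ (πi' : S → A i → ℝ), (∀ s, IsProbVec (πi' s)) →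
        ∀ s : S, ∑ s' : S,
            |transMat P π s s' - transMat P (Function.update π i πi') s s'| ≤
          2 * ζ * (Fintype.card S) * D *
            (Finset.univ.sup' Finset.univ_nonempty (fun ai : A i => (act i ai).card)) /
            (Fintype.card I) := by
  intro i π hπ πi' hπi' s
  simpa only [sup'_eq_sup] using congestion_transition_deviation_bound_general act hD.le hζ.le
    (fun s s' a a' => by simpa only [hPw] using hLip s s' _ _) i hπ hπi' s
end

section
/- (Proposition 2: perturbed Markov team games are Markov α-potential games with α = 2κ/(1−δ)².) Consider a finite Markov game in which each player's one-stage payoff decomposes as u_i(s,a) = r(s,a) + ξ_i(s,a), where r : S × A → ℝ is a common team payoff and the perturbations satisfy |ξ_i(s,a)| ≤ κ for all i ∈ I, s ∈ S, a ∈ A, for some κ ≥ 0. For each profile π, let Φ(·,π) : S → ℝ be the unique solution of Φ(s,π) = r(s,π) + δ·∑_{s'∈S} P^π(s'|s)·Φ(s',π), where r(s,π) = ∑_{a∈A} π(s,a)·r(s,a). Then for every state s, every player i, all policies π_i, π_i' of player i, and every π_{-i}: |(Φ(s,(π_i',π_{-i})) − Φ(s,(π_i,π_{-i}))) − (V_i(s,(π_i',π_{-i}))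 − V_i(s,(π_i,π_{-i})))| ≤ 2κ/(1−δ)². -/
open Finset

/-!
The difference `V i π - Φ π` is the value function of the perturbation `ξ i` alone. Since `P^π` is
row-stochastic, a value function of a payoff bounded by `κ` is bounded by `κ / (1 - δ)`: look at a
state where its absolute value is largest. Applying this at any two profiles bounds the defect by
`2 * κ / (1 - δ)`, which is at most `2 * κ / (1 - δ) ^ 2` because `0 < 1 - δ < 1`.
-/

section ProbVec

variable {α β : Type*} [Fintype α] [Fintype β]

theorem IsProbVec.abs_sum_mul_le_s2 {p f : α → ℝ} {c : ℝ} (hp : IsProbVec p) (hf : ∀ a, |f a| ≤ c) :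
    |∑ a, p a * f a| ≤ c :=
  calc |∑ a, p a * f a|
      ≤ ∑ a, |p a * f a| := abs_sum_le_sum_abs _ _
    _ = ∑ a, p a * |f a| := by simp only [abs_mul, abs_of_nonneg (hp.1 _)]
    _ ≤ ∑ a, p a * c := sum_le_sum fun a _ => mul_le_mul_of_nonneg_left (hf a) (hp.1 a)
    _ = c := by rw [← sum_mul, hp.2, one_mul]

theorem IsProbVec.mixture {p : α → ℝ} {q : α → β → ℝ} (hp : IsProbVec p)
    (hq : ∀ a, IsProbVec (q a)) : IsProbVec fun b => ∑ a, p a * q a b := by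
  refine ⟨fun b => sum_nonneg fun a _ => mul_nonneg (hp.1 a) ((hq a).1 b), ?_⟩
  rw [sum_comm]
  simp only [← mul_sum, (hq _).2, mul_one, hp.2]

theorem IsProbVec.pi_s2 {ι : Type*} [Fintype ι] [DecidableEq ι] {γ : ι → Type*} [∀ i, Fintype (γ i)]
    {p : ∀ i, γ i → ℝ} (hp : ∀ i, IsProbVec (p i)) :
    IsProbVec fun a : ∀ i, γ i => ∏ i, p i (a i) := by
  refine ⟨fun a => prod_nonneg fun i _ => (hp i).1 (a i), ?_⟩
  rw [← Fintype.prod_sum]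
  exact prod_eq_one fun i _ => (hp i).2

end ProbVec

section MarkovGame

variable {S I : Type*} [Fintype I] [DecidableEq I] {A : I → Type*} [∀ i, Fintype (A i)]
  {π : ∀ i, S → A i → ℝ}

theorem IsPolicy.update (hπ : IsPolicy π) {i : I} {πi' : S → A i → ℝ}
    (hπi' : ∀ s, IsProbVec (πi' s)) : IsPolicy (Function.update π i πi') := by
  intro j
  rcases eq_or_ne j i with rfl | hj
  · simpa only [Function.update_self] using hπi'
  · simpa only [Function.update_of_ne hj] using hπ j

theorem IsPolicy.isProbVec_jointDist (hπ : IsPolicy π) (s : S) : IsProbVec (jointDist π s) :=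
  IsProbVec.pi_s2 fun i => hπ i s

theorem IsPolicy.abs_expPay_le (hπ : IsPolicy π) {u : S → (∀ i, A i) → ℝ} {κ : ℝ} {s : S}
    (hu : ∀ a, |u s a| ≤ κ) : |expPay u π s| ≤ κ :=
  (hπ.isProbVec_jointDist s).abs_sum_mul_le_s2 hu

theorem expPay_sub (u v : S → (∀ i, A i) → ℝ) (π : ∀ i, S → A i → ℝ) (s : S) :
    expPay (u - v) π s = expPay u π s - expPay v π s := by
  simp only [expPay, Pi.sub_apply, mul_sub, sum_sub_distrib]

variable [Fintype S] {δ κ : ℝ} {P : S → (∀ i, A i) → S → ℝ}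

theorem IsPolicy.isProbVec_transMat (hπ : IsPolicy π) (hP : IsKernel P) (s : S) :
    IsProbVec (transMat P π s) :=
  (hπ.isProbVec_jointDist s).mixture (hP s)

namespace IsValueFun

variable {u v : S → (∀ i, A i) → ℝ} {V W : S → ℝ}

theorem sub (hV : IsValueFun δ P u π V) (hW : IsValueFun δ P v π W) :
    IsValueFun δ P (u - v) π (V - W) := by
  intro s
  simp only [expPay_sub, Pi.sub_apply, mul_sub, sum_sub_distrib]
  linarith [hV s, hW s]

theorem abs_le (hV : IsValueFun δ P u π V) (hδ : 0 ≤ δ) (hδ1 : δ < 1) (hP : IsKernel P)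
    (hπ : IsPolicy π) (hu : ∀ s a, |u s a| ≤ κ) (s : S) : |V s| ≤ κ / (1 - δ) := by
  have : Nonempty S := ⟨s⟩
  obtain ⟨m, hm⟩ := Finite.exists_max fun t => |V t|
  have hVm : |V m| ≤ κ + δ * |V m| :=
    calc |V m|
        = |expPay u π m + δ * ∑ t, transMat P π m t * V t| := by rw [← hV m]
      _ ≤ |expPay u π m| + δ * |∑ t, transMat P π m t * V t| := by
        simpa only [abs_mul, abs_of_nonneg hδ] using
          abs_add_le (expPay u π m) (δ * ∑ t, transMat P π m t * V t)
      _ ≤ κ + δ * |V m| :=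
        add_le_add (hπ.abs_expPay_le (hu m))
          (mul_le_mul_of_nonneg_left ((hπ.isProbVec_transMat hP m).abs_sum_mul_le_s2 hm) hδ)
  refine (hm s).trans ?_
  rw [le_div_iff₀ (sub_pos.mpr hδ1)]
  linarith

theorem abs_sub_le (hV : IsValueFun δ P u π V) (hW : IsValueFun δ P v π W) (hδ : 0 ≤ δ)
    (hδ1 : δ < 1) (hP : IsKernel P) (hπ : IsPolicy π) (huv : ∀ s a, |u s a - v s a| ≤ κ) (s : S) :
    |V s - W s| ≤ κ / (1 - δ) :=
  (hV.sub hW).abs_le hδ hδ1 hP hπ huv s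

end IsValueFun

theorem perturbed_markov_team_game_is_alpha_potential_general
    (hδ : 0 ≤ δ) (hδ1 : δ < 1) (hP : IsKernel P) {r u : S → (∀ i, A i) → ℝ}
    (hur : ∀ s a, |u s a - r s a| ≤ κ) {π' : ∀ i, S → A i → ℝ} (hπ : IsPolicy π)
    (hπ' : IsPolicy π') {V V' Φ Φ' : S → ℝ}
    (hV : IsValueFun δ P u π V) (hV' : IsValueFun δ P u π' V')
    (hΦ : IsValueFun δ P r π Φ) (hΦ' : IsValueFun δ P r π' Φ') (s : S) :
    |(Φ' s - Φ s) - (V' s - V s)| ≤ 2 * κ / (1 - δ) :=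
  calc |(Φ' s - Φ s) - (V' s - V s)|
      = |(V s - Φ s) - (V' s - Φ' s)| := by congr 1; ring
    _ ≤ |V s - Φ s| + |V' s - Φ' s| := abs_sub _ _
    _ ≤ κ / (1 - δ) + κ / (1 - δ) :=
      add_le_add (hV.abs_sub_le hΦ hδ hδ1 hP hπ hur s) (hV'.abs_sub_le hΦ' hδ hδ1 hP hπ' hur s)
    _ = 2 * κ / (1 - δ) := by ring

end MarkovGame

/-- **Proposition 2.** Perturbed Markov team games are Markov `α`-potential games
with `α = 2κ/(1-δ)²`. -/
theorem perturbed_markov_team_game_is_alpha_potential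
    {S I : Type*} [Fintype S] [Nonempty S] [DecidableEq S]
    [Fintype I] [Nonempty I] [DecidableEq I]
    {A : I → Type*} [∀ i, Fintype (A i)] [∀ i, Nonempty (A i)] [∀ i, DecidableEq (A i)]
    (δ : ℝ) (hδ : 0 < δ) (hδ1 : δ < 1)
    (P : S → (∀ i, A i) → S → ℝ) (hP : IsKernel P)
    (r : S → (∀ i, A i) → ℝ) (ξ : I → S → (∀ i, A i) → ℝ)
    (u : I → S → (∀ i, A i) → ℝ) (hu : ∀ i s a, u i s a = r s a + ξ i s a)
    (κ : ℝ) (hκ : 0 ≤ κ) (hξ : ∀ i s a, |ξ i s a| ≤ κ)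
    (V : I → (∀ j, S → A j → ℝ) → S → ℝ)
    (hV : ∀ i π, IsPolicy π → IsValueFun δ P (u i) π (V i π))
    (Φ : (∀ j, S → A j → ℝ) → S → ℝ)
    (hΦ : ∀ π, IsPolicy π → IsValueFun δ P r π (Φ π)) :
    ∀ (s : S) (i : I) (π : ∀ j, S → A j → ℝ), IsPolicy π →
      ∀ (πi' : S → A i → ℝ), (∀ s', IsProbVec (πi' s')) →
        |(Φ (Function.update π i πi') s - Φ π s) -
            (V i (Function.update π i πi') s - V i π s)| ≤ 2 * κ / (1 - δ) ^ 2 := by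
  intro s i π hπ πi' hπi'
  have hur : ∀ s a, |u i s a - r s a| ≤ κ := by simpa only [hu, add_sub_cancel_left] using hξ i
  have hπ' := hπ.update hπi'
  have hκδ : 2 * κ / (1 - δ) ≤ 2 * κ / (1 - δ) ^ 2 :=
    div_le_div_of_nonneg_left (by positivity) (pow_pos (by linarith) 2)
      (pow_le_of_le_one (by linarith) (by linarith) two_ne_zero)
  exact (perturbed_markov_team_game_is_alpha_potential_general hδ.le hδ1 hP hur hπ hπ'
    (hV i _ hπ) (hV i _ hπ') (hΦ _ hπ) (hΦ _ hπ') s).trans hκδ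
end

section
/- (Proposition 3, part 2: approximate equilibria of the associated Markov potential game are approximate equilibria of the Markov α-potential game.) Let G be a finite Markov game that is a Markov α-potential game with α-potential function Φ and value functions V_i. Let Ĝ be another finite Markov game with the same state set S, player set I, action sets A_i, and discount factor δ, with value functions V̂_i (defined by the Bellman equation for Ĝ's payoffs and transitions), such that Φ is an exact potential for Ĝ: for every state s, every player i, every policy π_i' of player i, and every profile π, V̂_i(s,(π_i',π_{-i})) − V̂_i(s,π) = Φ(s,(π_i',π_{-i})) − Φ(s,π). If π̃ is an ε-stationary Nash equilibrium of Ĝ (i.e., V̂_i(μ,π̃) ≥ V̂_i(μ,(π_i,π̃_{-i})) − ε for every player i, every policy π_i of player i, and every distribution μ on S), then π̃ is an (ε+α)-stationary Nash equilibrium of G: V_i(μ,π̃) ≥ V_i(μ,(π_i,π̃_{-i})) − (ε+α) for every i, π_i, and μ. -/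
open Finset

/-!
A potential `Φ` of both games turns each unilateral gain in `G` into a gain in `Ĝ`, up to the sum of
the two potential errors, at every state separately. Averaging over the initial state preserves
this bound because the weights are nonnegative and sum to one.
-/

theorem IsProbVec.sum_mul_le_sum_mul_add {σ : Type*} [Fintype σ] {μ : σ → ℝ} (hμ : IsProbVec μ)
    {f g : σ → ℝ} {c : ℝ} (hfg : ∀ s, f s ≤ g s + c) :
    ∑ s, μ s * f s ≤ ∑ s, μ s * g s + c :=
  calc ∑ s, μ s * f s
    _ ≤ ∑ s, μ s * (g s + c) :=
      sum_le_sum fun s _ => mul_le_mul_of_nonneg_left (hfg s) (hμ.1 s)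
    _ = ∑ s, μ s * g s + c := by
      simp only [mul_add, sum_add_distrib, ← sum_mul, hμ.2, one_mul]

section StrategicForm

variable {S I : Type*} [DecidableEq I] {X : I → Type*}

/-- The change in a state-dependent evaluation `f` of strategy profiles when player `i` deviates
from `π` to the strategy `x`. -/
def deviationGain (f : (∀ j, X j) → S → ℝ) (π : ∀ j, X j) (i : I) (x : X i) (s : S) : ℝ :=
  f (Function.update π i x) s - f π s

/-- `Φ` is an `α`-potential of the game with payoffs `V` in which player `i` chooses a strategy from
`K i`. In a Markov game `X i` is the ambient space `S → A i → ℝ` and `K i` is the set of stationary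
policies; `α = 0` gives exact potentials. -/
def IsApproxPotential (K : ∀ i, Set (X i)) (V : I → (∀ j, X j) → S → ℝ) (α : ℝ)
    (Φ : (∀ j, X j) → S → ℝ) : Prop :=
  ∀ s i π, (∀ j, π j ∈ K j) → ∀ x ∈ K i,
    |deviationGain Φ π i x s - deviationGain (V i) π i x s| ≤ α

/-- `π` is an `ε`-Nash equilibrium, for every initial state distribution, of the game with payoffs
`V` and strategy sets `K`. Membership of `π` itself in the strategy sets is not part of the
notion. -/
def IsApproxNash [Fintype S] (K : ∀ i, Set (X i)) (V : I → (∀ j, X j) → S → ℝ) (ε : ℝ)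
    (π : ∀ j, X j) : Prop :=
  ∀ i, ∀ x ∈ K i, ∀ μ : S → ℝ, IsProbVec μ →
    ∑ s, μ s * V i π s ≥ ∑ s, μ s * V i (Function.update π i x) s - ε

variable {K : ∀ i, Set (X i)} {V W : I → (∀ j, X j) → S → ℝ} {Φ : (∀ j, X j) → S → ℝ}
  {α β ε : ℝ} {π : ∀ j, X j}

theorem isApproxPotential_zero_iff :
    IsApproxPotential K V 0 Φ ↔ ∀ s i π, (∀ j, π j ∈ K j) → ∀ x ∈ K i,
      deviationGain (V i) π i x s = deviationGain Φ π i x s := by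
  simp only [IsApproxPotential, abs_nonpos_iff, sub_eq_zero, eq_comm]

theorem IsApproxPotential.abs_deviationGain_sub_le (hV : IsApproxPotential K V α Φ)
    (hW : IsApproxPotential K W β Φ) (hπ : ∀ j, π j ∈ K j) {i : I} {x : X i} (hx : x ∈ K i)
    (s : S) :
    |deviationGain (V i) π i x s - deviationGain (W i) π i x s| ≤ α + β :=
  calc |deviationGain (V i) π i x s - deviationGain (W i) π i x s|
    _ ≤ |deviationGain (V i) π i x s - deviationGain Φ π i x s|
        + |deviationGain Φ π i x s - deviationGain (W i) π i x s| := abs_sub_le _ _ _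
    _ ≤ α + β := add_le_add ((abs_sub_comm _ _).trans_le (hV s i π hπ x hx)) (hW s i π hπ x hx)

theorem IsApproxNash.of_deviationGain_le [Fintype S] (hπ : IsApproxNash K W ε π)
    (hgain : ∀ i, ∀ x ∈ K i, ∀ s,
      deviationGain (V i) π i x s ≤ deviationGain (W i) π i x s + α) :
    IsApproxNash K V (ε + α) π := by
  intro i x hx μ hμ
  have gain_W_le : ∑ s, μ s * deviationGain (W i) π i x s ≤ ε := by
    simp only [deviationGain, mul_sub, sum_sub_distrib]
    linarith [hπ i x hx μ hμ]
  have gain_V_le : ∑ s, μ s * deviationGain (V i) π i x s ≤ ε + α :=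
    (hμ.sum_mul_le_sum_mul_add (hgain i x hx)).trans (by gcongr)
  simp only [deviationGain, mul_sub, sum_sub_distrib] at gain_V_le
  linarith

theorem approx_equilibria_transfer_general [Fintype S] (hV : IsApproxPotential K V α Φ)
    (hW : IsApproxPotential K W β Φ) (hπ : ∀ j, π j ∈ K j) (hNash : IsApproxNash K W ε π) :
    IsApproxNash K V (ε + (α + β)) π :=
  hNash.of_deviationGain_le fun _ _ hx s =>
    sub_le_iff_le_add'.1 ((le_abs_self _).trans (hV.abs_deviationGain_sub_le hW hπ hx s))

end StrategicForm

/-- **Proposition 3, part 2.** Approximate equilibria of the associated Markov potential game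
are approximate equilibria of the Markov `α`-potential game. -/
theorem approx_equilibria_transfer
    {S I : Type*} [Fintype S] [Nonempty S] [DecidableEq S]
    [Fintype I] [Nonempty I] [DecidableEq I]
    {A : I → Type*} [∀ i, Fintype (A i)] [∀ i, Nonempty (A i)] [∀ i, DecidableEq (A i)]
    (δ : ℝ) (hδ : 0 < δ) (hδ1 : δ < 1)
    -- the Markov α-potential game G
    (P : S → (∀ i, A i) → S → ℝ) (hP : IsKernel P)
    (u : I → S → (∀ i, A i) → ℝ)
    (V : I → (∀ j, S → A j → ℝ) → S → ℝ)
    (hV : ∀ i π, IsPolicy π → IsValueFun δ P (u i) π (V i π))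
    (α : ℝ) (hα : 0 ≤ α)
    (Φ : (∀ j, S → A j → ℝ) → S → ℝ)
    (hpot : ∀ (s : S) (i : I) (π : ∀ j, S → A j → ℝ), IsPolicy π →
      ∀ (πi' : S → A i → ℝ), (∀ s', IsProbVec (πi' s')) →
        |(Φ (Function.update π i πi') s - Φ π s) -
          (V i (Function.update π i πi') s - V i π s)| ≤ α)
    -- the associated game Ĝ with the same states, players, actions and discount factor
    (Phat : S → (∀ i, A i) → S → ℝ) (hPhat : IsKernel Phat)
    (uhat : I → S → (∀ i, A i) → ℝ)
    (Vhat : I → (∀ j, S → A j → ℝ) → S → ℝ)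
    (hVhat : ∀ i π, IsPolicy π → IsValueFun δ Phat (uhat i) π (Vhat i π))
    -- Φ is an exact potential for Ĝ
    (hexact : ∀ (s : S) (i : I) (π : ∀ j, S → A j → ℝ), IsPolicy π →
      ∀ (πi' : S → A i → ℝ), (∀ s', IsProbVec (πi' s')) →
        Vhat i (Function.update π i πi') s - Vhat i π s =
          Φ (Function.update π i πi') s - Φ π s)
    -- π̃ is an ε-stationary Nash equilibrium of Ĝ
    (ε : ℝ) (πt : ∀ j, S → A j → ℝ) (hπt : IsPolicy πt)
    (hNE : ∀ (i : I) (πi : S → A i → ℝ), (∀ s, IsProbVec (πi s)) →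
      ∀ (μ : S → ℝ), IsProbVec μ →
        (∑ s, μ s * Vhat i πt s) ≥ (∑ s, μ s * Vhat i (Function.update πt i πi) s) - ε) :
    -- conclusion: π̃ is an (ε+α)-stationary Nash equilibrium of G
    ∀ (i : I) (πi : S → A i → ℝ), (∀ s, IsProbVec (πi s)) →
      ∀ (μ : S → ℝ), IsProbVec μ →
        (∑ s, μ s * V i πt s) ≥
          (∑ s, μ s * V i (Function.update πt i πi) s) - (ε + α) := by
  rw [← add_zero α]
  exact approx_equilibria_transfer_general
    (K := fun i => {p : S → A i → ℝ | ∀ s, IsProbVec (p s)})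
    hpot (isApproxPotential_zero_iff.2 hexact) hπt hNE
end
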